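/- arXiv:2206.00349 — 2 statements merged into one kernel-verified Lean document; each statement's English description precedes it below -/
import Mathlib

section
/- (Proposition 1) A hybrid formula φ is valid (⊨ φ) if and only if the disjunctive state consisting of the single game state P : φ is winning, i.e., there is a regulation function ρ such that I have a winning strategy for DG(P : φ, ρ). -/
/-- Hybrid logic formulas over nominals `ℕ` and propositional variables `ℕ`
(the two sorts are kept disjoint by the constructors). -/
inductive Form : Type where
  | prop : ℕ → Form
  | nom : ℕ → Form
  | rel : ℕ → ℕ → Form
  | and : Form → Form → Form
  | or : Form → Form → Form
  | imp : Form → Form → Form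
  | neg : Form → Form
  | at_ : ℕ → Form → Form
  | box : Form → Form
  | dia : Form → Form

/-- A model for hybrid logic: a nonempty set of worlds, an accessibility
relation, a valuation and an assignment of nominals to worlds. -/
structure Model where
  W : Type
  ne : Nonempty W
  R : W → W → Prop
  V : ℕ → W → Prop
  g : ℕ → W

/-- Satisfaction of a formula at a world of a model. -/
def sat (M : Model) : M.W → Form → Prop
  | w, .prop p => M.V p w
  | w, .nom i => M.g i = w
  | _, .rel i j => M.R (M.g i) (M.g j)
  | w, .and φ ψ => sat M w φ ∧ sat M w ψ
  | w, .or φ ψ => sat M w φ ∨ sat M w ψ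
  | w, .imp φ ψ => ¬ sat M w φ ∨ sat M w ψ
  | w, .neg φ => ¬ sat M w φ
  | _, .at_ i φ => sat M (M.g i) φ
  | w, .box φ => ∀ v, M.R w v → sat M v φ
  | w, .dia φ => ∃ v, M.R w v ∧ sat M v φ

/-- A model is named iff every world has a name, i.e. the assignment is surjective. -/
def Model.Named (M : Model) : Prop := Function.Surjective M.g

/-- A formula is valid iff it is true at every world of every model. -/
def Valid (φ : Form) : Prop := ∀ (M : Model) (w : M.W), sat M w φ

/-- Roles: `pro` means I am the proponent (`P`), `opp` that I am the opponent (`O`). -/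
inductive Role : Type where
  | pro : Role
  | opp : Role

/-- Role switch. -/
def Role.swap : Role → Role
  | .pro => .opp
  | .opp => .pro

/-- Game states of the semantic game over a named model, with worlds referred to
by their names: `loc r i φ` is `Q, i : φ` and `glob r φ` is `Q : φ`. -/
inductive NState : Type where
  | loc : Role → ℕ → Form → NState
  | glob : Role → Form → NState

/-- Elementary formulas: `p`, `i`, `R(i,j)`. -/
def Form.elem : Form → Prop
  | .prop _ => True
  | .nom _ => True
  | .rel _ _ => True
  | _ => False

/-- Elementary game states: states `Q, i : φ` with `φ` elementary (these are the
leaves of the semantic game over named models). -/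
def NState.elem : NState → Prop
  | .loc _ _ φ => φ.elem
  | .glob _ _ => False

/-- States labelled "I" (where it is My choice); all other non-leaf states are labelled "Y". -/
def NState.myTurn : NState → Prop
  | .loc .pro _ (.or _ _) => True
  | .loc .pro _ (.imp _ _) => True
  | .loc .pro _ (.neg _) => True
  | .loc .pro _ (.at_ _ _) => True
  | .loc .pro _ (.dia _) => True
  | .loc .opp _ (.and _ _) => True
  | .loc .opp _ (.box _) => True
  | .glob .opp _ => True
  | _ => False

/-- The (model-independent) child relation of the semantic game over named models,
using the reformulated rules `(R_□)`, `(R_◇)` and `(R_U)`: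
`NChild s t` says that `t` is a child of `s` in the game tree. -/
inductive NChild : NState → NState → Prop where
  | orL (r i φ ψ) : NChild (.loc r i (.or φ ψ)) (.loc r i φ)
  | orR (r i φ ψ) : NChild (.loc r i (.or φ ψ)) (.loc r i ψ)
  | andL (r i φ ψ) : NChild (.loc r i (.and φ ψ)) (.loc r i φ)
  | andR (r i φ ψ) : NChild (.loc r i (.and φ ψ)) (.loc r i ψ)
  | impL (r i φ ψ) : NChild (.loc r i (.imp φ ψ)) (.loc r.swap i φ)
  | impR (r i φ ψ) : NChild (.loc r i (.imp φ ψ)) (.loc r i ψ)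
  | neg (r i φ) : NChild (.loc r i (.neg φ)) (.loc r.swap i φ)
  | at_ (r i j φ) : NChild (.loc r i (.at_ j φ)) (.loc r j φ)
  | box (r i φ) (j : ℕ) : NChild (.loc r i (.box φ)) (.loc r j (.or (.neg (.rel i j)) φ))
  | dia (r i φ) (j : ℕ) : NChild (.loc r i (.dia φ)) (.loc r j (.and (.rel i j) φ))
  | glob (r φ) (i : ℕ) : NChild (.glob r φ) (.loc r i φ)

/-- The label of an elementary leaf state in the game over the model `M`:
"I" iff the corresponding elementary claim is correct. -/
def elemIWin (M : Model) : NState → Prop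
  | .loc .pro i φ => sat M (M.g i) φ
  | .loc .opp i φ => ¬ sat M (M.g i) φ
  | .glob _ _ => False

/-- I have a winning strategy for the semantic game `G(M, s)` over a named model:
at "I"-nodes I keep one child, at "Y"-nodes all children, and all leaves are labelled "I". -/
inductive IWinsN (M : Model) : NState → Prop where
  | leaf {s} : s.elem → elemIWin M s → IWinsN M s
  | move {s t} : s.myTurn → NChild s t → IWinsN M t → IWinsN M s
  | resp {s} : ¬ s.myTurn → ¬ s.elem → (∀ t, NChild s t → IWinsN M t) → IWinsN M s

/-- You have a winning strategy for the semantic game `G(M, s)` over a named model: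
at "Y"-nodes You keep one child, at "I"-nodes all children, and all leaves are labelled "Y". -/
inductive YWinsN (M : Model) : NState → Prop where
  | leaf {s} : s.elem → ¬ elemIWin M s → YWinsN M s
  | move {s t} : ¬ s.myTurn → NChild s t → YWinsN M t → YWinsN M s
  | resp {s} : s.myTurn → (∀ t, NChild s t → YWinsN M t) → YWinsN M s

/-- A disjunctive state: a finite multiset of game states. -/
abbrev DState : Type := Multiset NState

/-- A disjunctive state is elementary iff all its game states are. -/
def DElem (D : DState) : Prop := ∀ s ∈ D, s.elem

/-- A regulation function maps every non-elementary disjunctive state to one of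
its non-elementary game states. -/
def IsRegulation (ρ : DState → NState) : Prop :=
  ∀ D : DState, ¬ DElem D → ρ D ∈ D ∧ ¬ (ρ D).elem

/-- `D` is game valid: for every named model `M` there is a member of `D` for
which I have a winning strategy in the semantic game over `M`. -/
def GameValid (D : DState) : Prop :=
  ∀ M : Model, M.Named → ∃ s ∈ D, IWinsN M s

/-- I have a winning strategy for the disjunctive game `DG(D, ρ)`.
At the state `g ⋁ D` with `ρ (g ⋁ D) = g`: if `g` is labelled "I", I either move in `g`
or duplicate `g`; if `g` is labelled "Y", You move in `g` and I must win after every move.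
An elementary disjunctive state is a leaf labelled "I" (winning for Me) iff for every named
model some member of it is a leaf labelled "I" of the semantic game over that model.
Since winning strategies are wellfounded trees, infinite plays are not winning for Me. -/
inductive DWins (ρ : DState → NState) : DState → Prop where
  | leaf {D : DState} : DElem D → (∀ M : Model, M.Named → ∃ s ∈ D, IWinsN M s) →
      DWins ρ D
  | movI {D : DState} {g g' : NState} : ρ (g ::ₘ D) = g → g.myTurn → NChild g g' →
      DWins ρ (g' ::ₘ D) → DWins ρ (g ::ₘ D)
  | dup {D : DState} {g : NState} : ρ (g ::ₘ D) = g → g.myTurn →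
      DWins ρ (g ::ₘ g ::ₘ D) → DWins ρ (g ::ₘ D)
  | movY {D : DState} {g : NState} : ρ (g ::ₘ D) = g → ¬ g.myTurn → ¬ g.elem →
      (∀ g', NChild g g' → DWins ρ (g' ::ₘ D)) → DWins ρ (g ::ₘ D)

/-- `D` is winning: there is a regulation `ρ` such that I have a winning strategy
for `DG(D, ρ)`. -/
def Winning (D : DState) : Prop :=
  ∃ ρ : DState → NState, IsRegulation ρ ∧ DWins ρ D

/-- `Form.occurs k φ`: the nominal `k` occurs in the formula `φ`. -/
def Form.occurs (k : ℕ) : Form → Prop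
  | .prop _ => False
  | .nom i => i = k
  | .rel i j => i = k ∨ j = k
  | .and φ ψ => φ.occurs k ∨ ψ.occurs k
  | .or φ ψ => φ.occurs k ∨ ψ.occurs k
  | .imp φ ψ => φ.occurs k ∨ ψ.occurs k
  | .neg φ => φ.occurs k
  | .at_ i φ => i = k ∨ φ.occurs k
  | .box φ => φ.occurs k
  | .dia φ => φ.occurs k

/-- A nominal occurs in a game state iff it occurs as its label or in its formula. -/
def NState.occurs (k : ℕ) : NState → Prop
  | .loc _ i φ => i = k ∨ φ.occurs k
  | .glob _ φ => φ.occurs k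

/-- A nominal occurs in a disjunctive state iff it occurs in one of its game states. -/
def DOccurs (k : ℕ) (D : DState) : Prop := ∃ s ∈ D, s.occurs k

/-!
Soundness holds move by move: if some member of every state reached can be won by Me over `M`, then
so can some member of the state before the move.

For completeness one regulation serves all disjunctive states: it prefers states where You move and
otherwise consults the cardinality `n` of the disjunctive state, trying to pick the `n`-th entry of
a sequence in which every game state recurs. Moves preserve the cardinality and duplications raise
it by one, so by duplicating I can wait until any given state of Mine is picked. Hence a state which
I do not win can be enlarged forever, without becoming winning, so that every move available to Me
is eventually made while all My states and all elementary states survive. Each state of this chain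
has its elementary members refuted by some named model, and identifying the nominals that eventually
name the same world yields a named model refuting the whole chain. Since games over named models
only see named worlds, a downward Löwenheim–Skolem argument passes from named to arbitrary models.
-/

open Filter

theorem exists_seq_frequently_eq (α : Type*) [Countable α] [Nonempty α] :
    ∃ e : ℕ → α, ∀ a, ∃ᶠ n in atTop, e n = a := by
  obtain ⟨f, hf⟩ := exists_surjective_nat α
  refine ⟨fun n => f n.unpair.1, fun a => frequently_atTop.2 fun N => ?_⟩
  obtain ⟨k, rfl⟩ := hf a
  exact ⟨Nat.pair k N, Nat.right_le_pair k N, by simp only [Nat.unpair_pair]⟩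

theorem exists_surjective_eqOn_of_finite {α : Type*} [Countable α] {A : Set ℕ} (hA : A.Finite)
    (f : ℕ → α) : ∃ h : ℕ → α, h.Surjective ∧ Set.EqOn h f A := by
  have : Nonempty α := ⟨f 0⟩
  obtain ⟨e, he⟩ := exists_surjective_nat α
  obtain ⟨K, hK⟩ := hA.bddAbove
  refine ⟨fun i => if i ≤ K then f i else e (i - (K + 1)), fun a => ?_, fun i hi => if_pos (hK hi)⟩
  obtain ⟨n, rfl⟩ := he a
  exact ⟨K + 1 + n, by simp [show ¬ K + 1 + n ≤ K by omega]⟩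

section Countable

/-- An injective numbering of formulas, by which they are seen to be countably many. -/
def Form.code : Form → ℕ
  | .prop p => Nat.pair 0 p
  | .nom i => Nat.pair 1 i
  | .rel i j => Nat.pair 2 (Nat.pair i j)
  | .and φ ψ => Nat.pair 3 (Nat.pair φ.code ψ.code)
  | .or φ ψ => Nat.pair 4 (Nat.pair φ.code ψ.code)
  | .imp φ ψ => Nat.pair 5 (Nat.pair φ.code ψ.code)
  | .neg φ => Nat.pair 6 φ.code
  | .at_ i φ => Nat.pair 7 (Nat.pair i φ.code)
  | .box φ => Nat.pair 8 φ.code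
  | .dia φ => Nat.pair 9 φ.code

theorem Form.code_injective : Function.Injective Form.code := by
  intro φ
  induction φ <;> intro ψ h <;> cases ψ <;> simp only [Form.code, Nat.pair_eq_pair] at h <;> grind

instance : Countable Form := Form.code_injective.countable

instance : Countable NState :=
  Function.Surjective.countable (α := (ℕ × Form ⊕ ℕ × Form) ⊕ (Form ⊕ Form))
    (f := Sum.elim
      (Sum.elim (fun x => .loc .pro x.1 x.2) (fun x => .loc .opp x.1 x.2))
      (Sum.elim (.glob .pro) (.glob .opp))) <| by
    rintro (⟨_ | _, i, φ⟩ | ⟨_ | _, φ⟩)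
    exacts [⟨.inl (.inl (i, φ)), rfl⟩, ⟨.inl (.inr (i, φ)), rfl⟩, ⟨.inr (.inl φ), rfl⟩,
      ⟨.inr (.inr φ), rfl⟩]

instance : Inhabited NState := ⟨.glob .pro (.prop 0)⟩

end Countable

section GameStates

variable {s t : NState}

/-- The game states that are not leaves and in which the move is Yours. -/
def NState.yourTurn (s : NState) : Prop := ¬ s.myTurn ∧ ¬ s.elem

theorem NState.myTurn.not_elem (h : s.myTurn) : ¬ s.elem := by
  rcases s with ⟨_ | _, _, _ | _⟩ | ⟨_ | _, _⟩ <;>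
    simp_all [NState.myTurn, NState.elem, Form.elem]

/-- The set of children of a game state, which presents the relation `NChild` as a function. -/
def NState.children : NState → Set NState
  | .loc _ _ (.prop _) | .loc _ _ (.nom _) | .loc _ _ (.rel _ _) => ∅
  | .loc r i (.and φ ψ) | .loc r i (.or φ ψ) => {.loc r i φ, .loc r i ψ}
  | .loc r i (.imp φ ψ) => {.loc r.swap i φ, .loc r i ψ}
  | .loc r i (.neg φ) => {.loc r.swap i φ}
  | .loc r _ (.at_ j φ) => {.loc r j φ}
  | .loc r i (.box φ) => Set.range fun j => .loc r j (.or (.neg (.rel i j)) φ)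
  | .loc r i (.dia φ) => Set.range fun j => .loc r j (.and (.rel i j) φ)
  | .glob r φ => Set.range fun i => .loc r i φ

theorem nChild_iff_mem_children : NChild s t ↔ t ∈ s.children := by
  constructor
  · intro h
    cases h <;> simp [NState.children]
  · rcases s with ⟨r, i, _ | _⟩ | ⟨r, φ⟩ <;>
      simp only [NState.children, Set.mem_insert_iff, Set.mem_singleton_iff, Set.mem_range,
        Set.mem_empty_iff_false, false_imp_iff] <;>
      first
        | (rintro (rfl | rfl) <;> constructor)
        | (rintro ⟨j, rfl⟩; constructor)

theorem NState.exists_child_of_not_elem (h : ¬ s.elem) : ∃ t, NChild s t := by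
  simp only [nChild_iff_mem_children]
  rcases s with ⟨r, i, _ | _⟩ | ⟨r, φ⟩ <;> first
    | exact absurd trivial h
    | simp [NState.children]

/-- A complexity measure on formulas. The modalities weigh 4 because the game replaces `□φ` and
`◇φ` by `¬R(i,j) ∨ φ` and `R(i,j) ∧ φ`. -/
def Form.size : Form → ℕ
  | .prop _ | .nom _ | .rel _ _ => 1
  | .and φ ψ | .or φ ψ | .imp φ ψ => φ.size + ψ.size + 1
  | .neg φ | .at_ _ φ => φ.size + 1
  | .box φ | .dia φ => φ.size + 4

/-- The complexity of a game state, which decreases along moves. -/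
def NState.size : NState → ℕ
  | .loc _ _ φ => φ.size
  | .glob _ φ => φ.size + 1

theorem NChild.size_lt (h : NChild s t) : t.size < s.size := by
  cases h <;> simp only [NState.size, Form.size] <;> omega

end GameStates

section SemanticGame

variable {M : Model} {s : NState}

theorem iWinsN_iff_of_elem (hs : s.elem) : IWinsN M s ↔ elemIWin M s := by
  refine ⟨fun h => ?_, .leaf hs⟩
  cases h with
  | leaf _ h => exact h
  | move h => exact absurd hs h.not_elem
  | resp _ h => exact absurd hs h

theorem iWinsN_iff_of_myTurn (hs : s.myTurn) : IWinsN M s ↔ ∃ t, NChild s t ∧ IWinsN M t := by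
  refine ⟨fun h => ?_, fun ⟨_, hst, ht⟩ => .move hs hst ht⟩
  cases h with
  | leaf h => exact absurd h hs.not_elem
  | move _ hst ht => exact ⟨_, hst, ht⟩
  | resp h => exact absurd hs h

theorem iWinsN_iff_of_yourTurn (hs : s.yourTurn) : IWinsN M s ↔ ∀ t, NChild s t → IWinsN M t := by
  refine ⟨fun h => ?_, .resp hs.1 hs.2⟩
  cases h with
  | leaf h => exact absurd h hs.2
  | move h => exact absurd h hs.1
  | resp _ _ h => exact h

/-- Truth in `M` of the claim I defend in a game state: in `P, i : φ` that `φ` holds at the world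
named `i`, in `P : φ` that it holds at all named worlds, and in `O`-states the opposite. -/
def NState.Holds (M : Model) : NState → Prop
  | .loc .pro i φ => sat M (M.g i) φ
  | .loc .opp i φ => ¬ sat M (M.g i) φ
  | .glob .pro φ => ∀ i, sat M (M.g i) φ
  | .glob .opp φ => ¬ ∀ i, sat M (M.g i) φ

theorem NState.holds_iff_of_elem (hs : s.elem) : s.Holds M ↔ elemIWin M s := by
  rcases s with ⟨_ | _, i, φ⟩ | _
  exacts [Iff.rfl, Iff.rfl, hs.elim]

theorem NState.holds_iff_of_myTurn (hM : M.Named) (hs : s.myTurn) :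
    s.Holds M ↔ ∃ t, NChild s t ∧ t.Holds M := by
  simp only [nChild_iff_mem_children]
  rcases s with ⟨_ | _, i, _ | _⟩ | ⟨_ | _, φ⟩ <;> first
    | exact hs.elim
    | simp [NState.children, NState.Holds, sat, Role.swap, hM.exists, ← imp_iff_not_or]

theorem NState.holds_iff_of_yourTurn (hM : M.Named) (hs : s.yourTurn) :
    s.Holds M ↔ ∀ t, NChild s t → t.Holds M := by
  simp only [nChild_iff_mem_children]
  rcases s with ⟨_ | _, i, _ | _⟩ | ⟨_ | _, φ⟩ <;> first
    | exact absurd trivial hs.1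
    | exact absurd trivial hs.2
    | simp [NState.children, NState.Holds, sat, Role.swap, hM.forall, ← imp_iff_not_or]

theorem iWinsN_iff_holds (hM : M.Named) (s : NState) : IWinsN M s ↔ s.Holds M := by
  induction hn : s.size using Nat.strong_induction_on generalizing s with
  | _ n ih =>
    have ih : ∀ t, NChild s t → (IWinsN M t ↔ t.Holds M) := fun t hst =>
      ih _ (hn ▸ hst.size_lt) t rfl
    by_cases helem : s.elem
    · rw [iWinsN_iff_of_elem helem, NState.holds_iff_of_elem helem]
    by_cases hmy : s.myTurn
    · rw [iWinsN_iff_of_myTurn hmy, NState.holds_iff_of_myTurn hM hmy]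
      exact exists_congr fun t => and_congr_right (ih t)
    · rw [iWinsN_iff_of_yourTurn ⟨hmy, helem⟩, NState.holds_iff_of_yourTurn hM ⟨hmy, helem⟩]
      exact forall₂_congr ih

theorem gameValid_glob_pro_iff (φ : Form) :
    GameValid {.glob .pro φ} ↔ ∀ M : Model, M.Named → ∀ w, sat M w φ := by
  refine forall₂_congr fun M hM => ?_
  simp only [Multiset.mem_singleton, exists_eq_left, iWinsN_iff_holds hM, NState.Holds, hM.forall]

end SemanticGame

section DisjunctiveGame

variable {ρ : DState → NState} {D : DState} {s t : NState}

theorem DWins.gameValid (h : DWins ρ D) : GameValid D := by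
  intro M hM
  induction h with
  | leaf _ h => exact h M hM
  | movI _ hmy hchild _ ih =>
    simp only [Multiset.mem_cons, exists_eq_or_imp] at ih ⊢
    exact ih.imp_left (.move hmy hchild)
  | dup _ _ _ ih => simpa only [Multiset.mem_cons, or_self_left] using ih
  | movY _ hmy helem _ ih =>
    simp only [Multiset.mem_cons, exists_eq_or_imp] at ih ⊢
    refine or_iff_not_imp_right.2 fun hD => .resp hmy helem fun t ht => ?_
    exact (ih t ht).resolve_right hD

/-- A disjunctive state is settled iff You have no move in any of its game states. -/
def DState.Settled (D : DState) : Prop := ∀ s ∈ D, ¬ s.yourTurn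

/-- `s.SettlesTo t`: after finitely many moves of Yours only, the game state `s` becomes `t`. -/
def NState.SettlesTo : NState → NState → Prop :=
  Relation.ReflTransGen fun s t => s.yourTurn ∧ NChild s t

theorem NState.SettlesTo.eq_of_not_yourTurn (h : s.SettlesTo t) (hs : ¬ s.yourTurn) : t = s := by
  rcases h.cases_head with h | ⟨_, h, _⟩
  exacts [h.symm, absurd h.1 hs]

theorem NState.SettlesTo.exists_child (h : s.SettlesTo t) (hs : s.yourTurn) (ht : ¬ t.yourTurn) :
    ∃ u, NChild s u ∧ u.SettlesTo t := by
  rcases h.cases_head with rfl | ⟨u, hu, h⟩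
  exacts [absurd hs ht, ⟨u, hu.2, h⟩]

/-- The total complexity of a disjunctive state. -/
def DState.size (D : DState) : ℕ := (D.map NState.size).sum

theorem DState.size_cons_lt_of_nChild (D : DState) (h : NChild s t) :
    DState.size (t ::ₘ D) < DState.size (s ::ₘ D) := by
  simpa only [DState.size, Multiset.map_cons, Multiset.sum_cons, add_lt_add_iff_right]
    using h.size_lt

theorem dWins_of_forall_elem (hρ : IsRegulation ρ)
    (hD : ∀ M : Model, M.Named → ∃ s ∈ D, s.elem ∧ elemIWin M s) : DWins ρ D := by
  induction hn : D.size using Nat.strong_induction_on generalizing D with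
  | _ n ih =>
    by_cases hDE : DElem D
    · exact .leaf hDE fun M hM => (hD M hM).imp fun s hs => ⟨hs.1, .leaf hs.2.1 hs.2.2⟩
    obtain ⟨g, hg⟩ : ∃ g, ρ D = g := ⟨_, rfl⟩
    obtain ⟨hmem, helem⟩ := hg ▸ hρ D hDE
    obtain ⟨E, rfl⟩ := Multiset.exists_cons_of_mem hmem
    have hchild : ∀ t, NChild g t → DWins ρ (t ::ₘ E) := by
      refine fun t ht => ih _ (hn ▸ DState.size_cons_lt_of_nChild E ht) (fun M hM => ?_) rfl
      obtain ⟨s, hs, hse, hsw⟩ := hD M hM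
      have hsg : s ≠ g := by rintro rfl; exact helem hse
      exact ⟨s, Multiset.mem_cons_of_mem ((Multiset.mem_cons.1 hs).resolve_left hsg), hse, hsw⟩
    by_cases hmy : g.myTurn
    · obtain ⟨t, ht⟩ := g.exists_child_of_not_elem helem
      exact .movI hg hmy ht (hchild t ht)
    · exact .movY hg hmy helem hchild

theorem DWins.of_dup (hmem : ρ D ∈ D) (hmy : (ρ D).myTurn) (h : DWins ρ (ρ D ::ₘ D)) :
    DWins ρ D := by
  obtain ⟨g, hg⟩ : ∃ g, ρ D = g := ⟨_, rfl⟩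
  rw [hg] at hmem hmy h
  obtain ⟨E, rfl⟩ := Multiset.exists_cons_of_mem hmem
  exact .dup hg hmy h

/-- A regulation is fair if it lets You move whenever You can and otherwise, in settled states
containing a state `s` of Mine, picks `s` at infinitely many cardinalities. Cardinality serves as a
clock that only My duplications advance. -/
structure IsFairRegulation (ρ : DState → NState) : Prop where
  isRegulation : IsRegulation ρ
  yourTurn_of_exists : ∀ D : DState, (∃ s ∈ D, s.yourTurn) → (ρ D).yourTurn
  frequently_eq : ∀ s : NState, s.myTurn →
    ∃ᶠ n in atTop, ∀ D : DState, D.Settled → D.card = n → s ∈ D → ρ D = s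

theorem exists_isFairRegulation : ∃ ρ, IsFairRegulation ρ := by
  obtain ⟨e, he⟩ := exists_seq_frequently_eq NState
  have hex : ∀ D : DState, ∃ g : NState, (¬ DElem D → g ∈ D ∧ ¬ g.elem) ∧
      ((∃ s ∈ D, s.yourTurn) → g.yourTurn) ∧
      (D.Settled → e D.card ∈ D → (e D.card).myTurn → g = e D.card) := by
    intro D
    by_cases hyour : ∃ s ∈ D, s.yourTurn
    · obtain ⟨s, hs, hsy⟩ := hyour
      exact ⟨s, fun _ => ⟨hs, hsy.2⟩, fun _ => hsy, fun hD => absurd hsy (hD s hs)⟩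
    by_cases hmy : e D.card ∈ D ∧ (e D.card).myTurn
    · exact ⟨_, fun _ => ⟨hmy.1, hmy.2.not_elem⟩, fun h => absurd h hyour, fun _ _ _ => rfl⟩
    by_cases hD : DElem D
    · exact ⟨e D.card, fun h => absurd hD h, fun h => absurd h hyour, fun _ _ _ => rfl⟩
    · simp only [DElem, not_forall] at hD
      obtain ⟨s, hs, helem⟩ := hD
      exact ⟨s, fun _ => ⟨hs, helem⟩, fun h => absurd h hyour,
        fun _ h₁ h₂ => absurd ⟨h₁, h₂⟩ hmy⟩
  choose ρ hreg hyour hmy using hex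
  refine ⟨ρ, hreg, hyour, fun s hs => (he s).mono ?_⟩
  rintro n rfl D hD rfl hmem
  exact hmy D hD hmem hs

namespace IsFairRegulation

theorem mem_of_yourTurn_mem (hρ : IsFairRegulation ρ) (hs : s ∈ D) (hsy : s.yourTurn) : ρ D ∈ D :=
  (hρ.isRegulation D fun hD => hsy.2 (hD s hs)).1

theorem exists_settled (hρ : IsFairRegulation ρ) (hD : ¬ DWins ρ D) :
    ∃ D' : DState, ¬ DWins ρ D' ∧ D'.Settled ∧ ∀ s ∈ D, ∃ t ∈ D', s.SettlesTo t := by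
  induction hn : D.size using Nat.strong_induction_on generalizing D with
  | _ n ih =>
    by_cases hset : D.Settled
    · exact ⟨D, hD, hset, fun s hs => ⟨s, hs, .refl⟩⟩
    obtain ⟨g, hg⟩ : ∃ g, ρ D = g := ⟨_, rfl⟩
    obtain ⟨hmem, hyour⟩ : g ∈ D ∧ g.yourTurn := by
      simp only [DState.Settled, not_forall, not_not] at hset
      obtain ⟨s, hs, hsy⟩ := hset
      exact hg ▸ ⟨hρ.mem_of_yourTurn_mem hs hsy, hρ.yourTurn_of_exists D ⟨s, hs, hsy⟩⟩
    obtain ⟨E, rfl⟩ := Multiset.exists_cons_of_mem hmem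
    obtain ⟨t, ht, htE⟩ : ∃ t, NChild g t ∧ ¬ DWins ρ (t ::ₘ E) := by
      by_contra! h
      exact hD (.movY hg hyour.1 hyour.2 h)
    obtain ⟨D', hD', hset', hto⟩ := ih _ (hn ▸ DState.size_cons_lt_of_nChild E ht) htE rfl
    rw [Multiset.forall_mem_cons] at hto
    obtain ⟨x, hx, htx⟩ := hto.1
    exact ⟨D', hD', hset', Multiset.forall_mem_cons.2 ⟨⟨x, hx, .head ⟨hyour, ht⟩ htx⟩, hto.2⟩⟩

theorem exists_le_eq (hρ : IsFairRegulation ρ) (hD : ¬ DWins ρ D) (hset : D.Settled)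
    (hs : s ∈ D) (hmy : s.myTurn) :
    ∃ D' : DState, D ≤ D' ∧ ¬ DWins ρ D' ∧ D'.Settled ∧ ρ D' = s := by
  have hcard : ∀ n ≥ D.card, ∃ D' : DState, D ≤ D' ∧ ¬ DWins ρ D' ∧ D'.Settled ∧ D'.card = n := by
    intro n hn
    induction n, hn using Nat.le_induction with
    | base => exact ⟨D, le_rfl, hD, hset, rfl⟩
    | succ n _ ih =>
      obtain ⟨D', hle, hD', hset', rfl⟩ := ih
      obtain ⟨hmem, helem⟩ := hρ.isRegulation D' fun h =>
        hmy.not_elem (h s (Multiset.mem_of_le hle hs))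
      have hmy' : (ρ D').myTurn := by_contra fun h => hset' _ hmem ⟨h, helem⟩
      exact ⟨ρ D' ::ₘ D', hle.trans (Multiset.le_cons_self _ _), fun h => hD' (h.of_dup hmem hmy'),
        Multiset.forall_mem_cons.2 ⟨hset' _ hmem, hset'⟩, Multiset.card_cons _ _⟩
  obtain ⟨n, hn, hρs⟩ := frequently_atTop.1 (hρ.frequently_eq s hmy) D.card
  obtain ⟨D', hle, hD', hset', hcard'⟩ := hcard n hn
  exact ⟨D', hle, hD', hset', hρs D' hset' hcard' (Multiset.mem_of_le hle hs)⟩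

theorem exists_subset_settlesTo (hρ : IsFairRegulation ρ) (hD : ¬ DWins ρ D) (hset : D.Settled)
    (hs : s ∈ D) (hmy : s.myTurn) (hst : NChild s t) :
    ∃ D' : DState, D ⊆ D' ∧ ¬ DWins ρ D' ∧ D'.Settled ∧ ∃ x ∈ D', t.SettlesTo x := by
  obtain ⟨D₁, hle₁, hD₁, hset₁, hρ₁⟩ := hρ.exists_le_eq hD hset hs hmy
  have hs₁ : s ∈ D₁ := Multiset.mem_of_le hle₁ hs
  have hdup : ¬ DWins ρ (s ::ₘ D₁) := fun h => hD₁ (.of_dup (hρ₁ ▸ hs₁) (hρ₁ ▸ hmy) (hρ₁ ▸ h))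
  obtain ⟨D₂, hle₂, hD₂, hset₂, hρ₂⟩ := hρ.exists_le_eq hdup
    (Multiset.forall_mem_cons.2 ⟨hset s hs, hset₁⟩) (Multiset.mem_cons_self s D₁) hmy
  obtain ⟨E, rfl⟩ := Multiset.le_iff_exists_add.1 hle₂
  rw [Multiset.cons_add] at hD₂ hset₂ hρ₂
  obtain ⟨D₃, hD₃, hset₃, hto⟩ := hρ.exists_settled (D := t ::ₘ (D₁ + E))
    fun h => hD₂ (.movI hρ₂ hmy hst h)
  rw [Multiset.forall_mem_cons] at hto
  refine ⟨D₃, fun u hu => ?_, hD₃, hset₃, hto.1⟩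
  obtain ⟨x, hx, hux⟩ := hto.2 u (Multiset.mem_add.2 (.inl (Multiset.mem_of_le hle₁ hu)))
  rwa [← hux.eq_of_not_yourTurn (hset u hu)]

theorem exists_chain (hρ : IsFairRegulation ρ) (hD : ¬ DWins ρ D) : ∃ Q : ℕ → DState,
    (∀ s ∈ D, ∃ t ∈ Q 0, s.SettlesTo t) ∧ (∀ m n, m ≤ n → Q m ⊆ Q n) ∧
    (∀ n, ¬ DWins ρ (Q n) ∧ (Q n).Settled) ∧
    ∀ n, ∀ s ∈ Q n, s.myTurn → ∀ t, NChild s t → ∃ m, ∃ x ∈ Q m, t.SettlesTo x := by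
  obtain ⟨D₀, hD₀, hset₀, hto⟩ := hρ.exists_settled hD
  obtain ⟨e, he⟩ := exists_seq_frequently_eq (NState × NState)
  let P : Type := {D : DState // ¬ DWins ρ D ∧ D.Settled}
  have hstep : ∀ (D : P) (p : NState × NState), ∃ D' : P, D.1 ⊆ D'.1 ∧
      (p.1 ∈ D.1 → p.1.myTurn → NChild p.1 p.2 → ∃ x ∈ D'.1, p.2.SettlesTo x) := by
    rintro ⟨D, hD, hset⟩ ⟨s, t⟩
    by_cases h : s ∈ D ∧ s.myTurn ∧ NChild s t
    · obtain ⟨D', hsub, hD', hset', hx⟩ := hρ.exists_subset_settlesTo hD hset h.1 h.2.1 h.2.2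
      exact ⟨⟨D', hD', hset'⟩, hsub, fun _ _ _ => hx⟩
    · exact ⟨⟨D, hD, hset⟩, Multiset.Subset.refl _, fun h₁ h₂ h₃ => absurd ⟨h₁, h₂, h₃⟩ h⟩
  choose succ hsub hnext using hstep
  let Q : ℕ → P := fun n => n.rec ⟨D₀, hD₀, hset₀⟩ fun n D => succ D (e n)
  have hmono : ∀ m n, m ≤ n → (Q m).1 ⊆ (Q n).1 := by
    intro m n hmn
    induction n, hmn using Nat.le_induction with
    | base => exact Multiset.Subset.refl _
    | succ n _ ih => exact Multiset.Subset.trans ih (hsub (Q n) (e n))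
  refine ⟨fun n => (Q n).1, hto, hmono, fun n => (Q n).2, fun n s hs hmy t hst => ?_⟩
  obtain ⟨m, hnm, hem⟩ := frequently_atTop.1 (he (s, t)) n
  refine ⟨m + 1, ?_⟩
  have h := hnext (Q m) (e m)
  rw [hem] at h
  simpa only [Q, hem] using h (hmono n m hnm hs) hmy hst

end IsFairRegulation

end DisjunctiveGame

section Limit

variable {ι : Type*} (l : Filter ι) (M : ι → Model)

/-- The limit of a family of models along a filter: worlds are nominals, identified when eventually
they name the same world, and atomic facts hold when they hold eventually. -/
def Model.limit : Model where
  W := Quotient ((l.productSetoid fun a => (M a).W).comap fun i a => (M a).g i)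
  ne := ⟨Quotient.mk _ 0⟩
  R := Quotient.lift₂ (fun i j => ∀ᶠ a in l, (M a).R ((M a).g i) ((M a).g j))
    fun _ _ _ _ hi hj => propext <| eventually_congr <| by
      filter_upwards [hi, hj] with a hi hj
      rw [hi, hj]
  V p := Quotient.lift (fun i => ∀ᶠ a in l, (M a).V p ((M a).g i))
    fun _ _ hi => propext <| eventually_congr <| by
      filter_upwards [hi] with a hi
      rw [hi]
  g := Quotient.mk _

theorem Model.limit_named : (Model.limit l M).Named := Quotient.mk_surjective

variable {l M}

theorem Model.sat_limit_iff {φ : Form} (hφ : φ.elem) (i : ℕ) :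
    sat (limit l M) ((limit l M).g i) φ ↔ ∀ᶠ a in l, sat (M a) ((M a).g i) φ := by
  cases φ with
  | prop | rel => exact Iff.rfl
  | nom j => exact Quotient.eq
  | _ => exact hφ.elim

theorem Model.not_elemIWin_limit [l.NeBot] {s : NState} (hs : s.elem)
    (h : ∀ᶠ a in l, ¬ elemIWin (M a) s) : ¬ elemIWin (limit l M) s := by
  rcases s with ⟨_ | _, i, φ⟩ | _
  · exact (sat_limit_iff hs i).not.2 (not_eventually.2 h.frequently)
  · exact not_not.2 ((sat_limit_iff hs i).2 (h.mono fun _ => not_not.1))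
  · exact hs.elim

end Limit

section Completeness

variable {ρ : DState → NState} {D : DState}

theorem IsFairRegulation.dWins_of_gameValid (hρ : IsFairRegulation ρ) (hD : GameValid D) :
    DWins ρ D := by
  by_contra hlose
  obtain ⟨Q, hto, hmono, hQ, hmove⟩ := hρ.exists_chain hlose
  have hrefute : ∀ n, ∃ M : Model, M.Named ∧ ∀ s ∈ Q n, s.elem → ¬ elemIWin M s := by
    intro n
    by_contra! h
    exact (hQ n).1 (dWins_of_forall_elem hρ.isRegulation h)
  choose M _ hM using hrefute
  let L : Model := .limit atTop M
  have hlost : ∀ s, IWinsN L s → ∀ x, s.SettlesTo x → ∀ n, x ∉ Q n := by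
    intro s hs
    induction hs with
    | leaf helem hwin =>
      intro x hx n hxn
      obtain rfl := hx.eq_of_not_yourTurn fun h => h.2 helem
      refine Model.not_elemIWin_limit helem ?_ hwin
      filter_upwards [eventually_ge_atTop n] with m hm using hM m _ (hmono n m hm hxn) helem
    | move hmy hchild _ ih =>
      intro x hx n hxn
      obtain rfl := hx.eq_of_not_yourTurn fun h => h.1 hmy
      obtain ⟨m, y, hym, hy⟩ := hmove n _ hxn hmy _ hchild
      exact ih y hy m hym
    | resp hmy helem _ ih =>
      intro x hx n hxn
      obtain ⟨t, hst, htx⟩ := hx.exists_child ⟨hmy, helem⟩ ((hQ n).2 x hxn)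
      exact ih t hst x htx n hxn
  obtain ⟨s, hs, hwin⟩ := hD L (Model.limit_named _ _)
  obtain ⟨x, hx, hsx⟩ := hto s hs
  exact hlost s hwin x hsx 0 hx

theorem winning_iff_gameValid : Winning D ↔ GameValid D := by
  refine ⟨fun ⟨_, _, h⟩ => h.gameValid, fun h => ?_⟩
  obtain ⟨ρ, hρ⟩ := exists_isFairRegulation
  exact ⟨ρ, hρ.isRegulation, hρ.dWins_of_gameValid h⟩

end Completeness

section LoewenheimSkolem

theorem Form.finite_setOf_occurs (φ : Form) : {k | φ.occurs k}.Finite := by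
  induction φ with
  | prop | nom | rel | and | or | imp | neg | at_ | box | dia =>
    simp_all [Form.occurs, Set.ofPred_or, Set.finite_union]

variable {M : Model} {S : Set M.W}

/-- A set of worlds is witness-closed (the Tarski–Vaught condition) if each of its members that sees
some world satisfying `φ` sees one within the set. -/
def Model.WitnessClosed (M : Model) (S : Set M.W) : Prop :=
  ∀ v ∈ S, ∀ φ, (∃ u, M.R v u ∧ sat M u φ) → ∃ u ∈ S, M.R v u ∧ sat M u φ

/-- The restriction of a model to a set of worlds, with a new assignment of nominals. -/
def Model.restrict (M : Model) (S : Set M.W) (h : ℕ → S) : Model where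
  W := S
  ne := ⟨h 0⟩
  R u v := M.R u v
  V p u := M.V p u
  g := h

theorem Model.WitnessClosed.sat_restrict_iff (hS : M.WitnessClosed S) {h : ℕ → S} {φ : Form}
    (hφ : ∀ k, φ.occurs k → h k = M.g k) (v : S) : sat (M.restrict S h) v φ ↔ sat M v φ := by
  induction φ generalizing v with
  | prop p => exact Iff.rfl
  | nom i =>
    change h i = v ↔ M.g i = v
    rw [← hφ i rfl]
    exact Subtype.ext_iff
  | rel i j =>
    change M.R (h i) (h j) ↔ M.R (M.g i) (M.g j)
    rw [hφ i (.inl rfl), hφ j (.inr rfl)]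
  | and φ ψ ihφ ihψ =>
    exact and_congr (ihφ (fun k hk => hφ k (.inl hk)) v) (ihψ (fun k hk => hφ k (.inr hk)) v)
  | or φ ψ ihφ ihψ =>
    exact or_congr (ihφ (fun k hk => hφ k (.inl hk)) v) (ihψ (fun k hk => hφ k (.inr hk)) v)
  | imp φ ψ ihφ ihψ =>
    exact or_congr (ihφ (fun k hk => hφ k (.inl hk)) v).not (ihψ (fun k hk => hφ k (.inr hk)) v)
  | neg φ ih => exact (ih hφ v).not
  | at_ i φ ih =>
    change sat (M.restrict S h) (h i) φ ↔ sat M (M.g i) φ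
    rw [← hφ i (.inl rfl)]
    exact ih (fun k hk => hφ k (.inr hk)) (h i)
  | box φ ih =>
    refine ⟨fun hbox u hvu => ?_, fun hbox u hvu => (ih hφ u).2 (hbox u.1 hvu)⟩
    by_contra hu
    obtain ⟨x, hxS, hvx, hx⟩ := hS v v.2 (.neg φ) ⟨u, hvu, hu⟩
    exact hx ((ih hφ ⟨x, hxS⟩).1 (hbox ⟨x, hxS⟩ hvx))
  | dia φ ih =>
    refine ⟨fun ⟨u, hvu, hu⟩ => ⟨u.1, hvu, (ih hφ u).1 hu⟩, fun hdia => ?_⟩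
    obtain ⟨x, hxS, hvx, hx⟩ := hS v v.2 φ hdia
    exact ⟨⟨x, hxS⟩, hvx, (ih hφ ⟨x, hxS⟩).2 hx⟩

theorem Model.exists_countable_witnessClosed (M : Model) {B : Set M.W} (hB : B.Countable) :
    ∃ S : Set M.W, B ⊆ S ∧ S.Countable ∧ M.WitnessClosed S := by
  have := M.ne
  choose! f hf using fun (φ : Form) (v : M.W) (h : ∃ u, M.R v u ∧ sat M u φ) => h
  refine ⟨Set.image2 (fun l v => List.foldr f v l) Set.univ B,
    fun v hv => ⟨[], trivial, v, hv, rfl⟩, Set.countable_univ.image2 hB _, ?_⟩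
  rintro _ ⟨l, -, v, hv, rfl⟩ φ hφ
  exact ⟨_, ⟨φ :: l, trivial, v, hv, rfl⟩, hf φ _ hφ⟩

theorem valid_iff_forall_named (φ : Form) :
    Valid φ ↔ ∀ M : Model, M.Named → ∀ w, sat M w φ := by
  refine ⟨fun h M _ => h M, fun h M w => ?_⟩
  obtain ⟨S, hBS, hcount, hS⟩ :=
    M.exists_countable_witnessClosed ((Set.countable_range M.g).insert w)
  have hg : ∀ i, M.g i ∈ S := fun i => hBS (.inr ⟨i, rfl⟩)
  have : Countable S := hcount.to_subtype
  obtain ⟨g', hsurj, hg'⟩ :=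
    exists_surjective_eqOn_of_finite φ.finite_setOf_occurs fun i => (⟨M.g i, hg i⟩ : S)
  exact (hS.sat_restrict_iff (fun k hk => congrArg Subtype.val (hg' hk)) ⟨w, hBS (.inl rfl)⟩).1
    (h (M.restrict S g') hsurj _)

end LoewenheimSkolem

/-- (Proposition 1) `φ` is valid iff the disjunctive state `P : φ` is winning. -/
theorem valid_iff_winning (φ : Form) :
    Valid φ ↔ Winning {NState.glob .pro φ} := by
  rw [winning_iff_gameValid, gameValid_glob_pro_iff]
  exact valid_iff_forall_named φ
end

section
/- (Countermodel extraction; left-to-right direction of Theorem 2 in constructive form) If a disjunctive state D₀ is not winning, then there exists a named model M such that You have a winning strategy in the semantic game G(M, g) for every game state g occurring in D₀. -/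
/-!
Call a disjunctive state derivable if I can win from it when I may pick the active game state anew
at every move. Derivable states are winning: they form the least fixed point of a monotone operator,
so they carry an ordinal rank, and a regulation that always picks a game state in which the rank can
be decreased makes every play finite.

From an underivable state, decompose fairly: answer Your choices so as to stay underivable, and
duplicate each state of Mine before moving in it, so that it persists while its children are added
one after the other. The states met on the way form a set in which You always have an answer, and
each finite set of its elementary members is refuted by some model, because an underivable state
decomposes into an underivable elementary one. A compactness argument, through an ultraproduct
restricted to the worlds with a name, gives one named model refuting all elementary members, and
there You win by staying in the set.
-/

theorem exists_rank_decreasing_on_lfp.{u} {α : Type u} (f : Set α →o Set α) :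
    ∃ rank : α → Ordinal.{u}, ∀ a ∈ f.lfp, a ∈ f {b | b ∈ f.lfp ∧ rank b < rank a} := by
  let stage : Ordinal.{u} → Set α := OrdinalApprox.lfpApprox f ⊥
  have stage_subset (o : Ordinal.{u}) : stage o ⊆ f.lfp :=
    OrdinalApprox.lfpApprox_le_of_mem_fixedPoints f f.map_lfp bot_le o
  have stage_eq (o : Ordinal.{u}) : stage o = ⋃ b < o, f (stage b) := by
    unfold stage
    rw [OrdinalApprox.lfpApprox, bot_sup_eq]
    rfl
  obtain ⟨o, ho⟩ : ∃ o, stage o = f.lfp := OrdinalApprox.lfp_mem_range_lfpApprox f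
  let rank (a : α) : Ordinal.{u} := sInf {o | a ∈ stage o}
  refine ⟨rank, fun a ha => ?_⟩
  have ha_stage : a ∈ stage (rank a) := csInf_mem (s := {o | a ∈ stage o}) ⟨o, ho.ge ha⟩
  rw [stage_eq] at ha_stage
  obtain ⟨o', ho', ha_step⟩ := Set.mem_iUnion₂.1 ha_stage
  have rank_lt : stage o' ⊆ {b | b ∈ f.lfp ∧ rank b < rank a} :=
    fun b hb => ⟨stage_subset o' hb, (csInf_le' (s := {o | b ∈ stage o}) hb).trans_lt ho'⟩
  exact f.mono rank_lt ha_step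

/-! ### The semantic game -/

theorem NState.not_elem_of_myTurn {s : NState} (h : s.myTurn) : ¬ s.elem := by
  rcases s with ⟨_ | _, i, φ⟩ | ⟨r, φ⟩
  · cases φ <;> simp_all [NState.myTurn, NState.elem, Form.elem]
  · cases φ <;> simp_all [NState.myTurn, NState.elem, Form.elem]
  · exact id

/-- The complexity of a formula, a termination measure for the semantic game. The weight `3` of the
modalities makes the auxiliary formulas `¬R(i,j) ∨ φ` and `R(i,j) ∧ φ`, of complexity at most
`φ.complexity + 2`, simpler than `□φ` and `◇φ`. -/
def Form.complexity : Form → ℕ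
  | .prop _ | .nom _ | .rel _ _ => 0
  | .and φ ψ | .or φ ψ | .imp φ ψ => φ.complexity + ψ.complexity + 1
  | .neg φ | .at_ _ φ => φ.complexity + 1
  | .box φ | .dia φ => φ.complexity + 3

/-- The complexity of a game state, which decreases along every move of the semantic game. -/
def NState.complexity : NState → ℕ
  | .loc _ _ φ => φ.complexity
  | .glob _ φ => φ.complexity + 1

theorem NChild.complexity_lt {s t : NState} (h : NChild s t) : t.complexity < s.complexity := by
  cases h <;> simp only [NState.complexity, Form.complexity] <;> omega

/-- An enumeration of the children of a non-elementary game state, with repetitions where there are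
fewer than infinitely many children; the value at elementary states is junk. -/
def NState.child : NState → ℕ → NState
  | .loc r i (.or φ ψ), n | .loc r i (.and φ ψ), n => .loc r i (if n = 0 then φ else ψ)
  | .loc r i (.imp φ ψ), n => if n = 0 then .loc r.swap i φ else .loc r i ψ
  | .loc r i (.neg φ), _ => .loc r.swap i φ
  | .loc r _ (.at_ j φ), _ => .loc r j φ
  | .loc r i (.box φ), j => .loc r j (.or (.neg (.rel i j)) φ)
  | .loc r i (.dia φ), j => .loc r j (.and (.rel i j) φ)
  | .loc r i φ, _ => .loc r i φ
  | .glob r φ, i => .loc r i φ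

theorem NState.nChild_child {s : NState} (hs : ¬ s.elem) (n : ℕ) : NChild s (s.child n) := by
  rcases s with ⟨r, i, φ⟩ | ⟨r, φ⟩
  · cases φ <;> simp only [NState.elem, Form.elem, not_true_eq_false] at hs <;>
      simp only [NState.child] <;> (try split) <;> constructor
  · constructor

theorem NChild.exists_child_eq {s t : NState} (h : NChild s t) : ∃ n, s.child n = t := by
  cases h
  case orL | andL | impL | neg | at_ => exact ⟨0, rfl⟩
  case orR | andR | impR => exact ⟨1, rfl⟩
  case box j | dia j | glob j => exact ⟨j, rfl⟩

/-- `M.Refutes T`: every elementary state of `T` is labelled "Y" in the games over `M`. -/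
def Model.Refutes (M : Model) (T : Set NState) : Prop :=
  ∀ s ∈ T, s.elem → ¬ elemIWin M s

/-- A set of game states in which You always have an answer: the game-theoretic analogue of a
Hintikka set. -/
structure Saturated (T : Set NState) : Prop where
  child_mem : ∀ s ∈ T, s.myTurn → ∀ t, NChild s t → t ∈ T
  exists_child_mem : ∀ s ∈ T, ¬ s.elem → ¬ s.myTurn → ∃ t ∈ T, NChild s t

theorem Saturated.yWinsN {T : Set NState} (hT : Saturated T) {M : Model} (hM : M.Refutes T)
    {s : NState} (hs : s ∈ T) : YWinsN M s := by
  induction hn : s.complexity using Nat.strong_induction_on generalizing s with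
  | _ n ih =>
    subst hn
    by_cases he : s.elem
    · exact .leaf he (hM s hs he)
    by_cases hm : s.myTurn
    · exact .resp hm fun t ht => ih _ ht.complexity_lt (hT.child_mem s hs hm t ht) rfl
    · obtain ⟨t, htT, ht⟩ := hT.exists_child_mem s hs he hm
      exact .move hm ht (ih _ ht.complexity_lt htT rfl)

/-! ### Compactness -/

section Ultraproduct

open Filter

variable {ι : Type*} (U : Ultrafilter ι) (M : ι → Model)

/-- Two nominals are identified iff they name the same world of the ultraproduct of the `M a`. -/
def nominalSetoid : Setoid ℕ :=
  ((U : Filter ι).productSetoid fun a => (M a).W).comap fun i a => (M a).g i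

/-- The submodel of the ultraproduct of the models `M a` formed by the worlds with a name,
represented by their names. -/
def namedUltraproduct : Model where
  W := Quotient (nominalSetoid U M)
  ne := ⟨Quotient.mk _ 0⟩
  R := Relation.Map (fun i j => ∀ᶠ a in (U : Filter ι), (M a).R ((M a).g i) ((M a).g j))
    (Quotient.mk _) (Quotient.mk _)
  V p w := w ∈ Quotient.mk _ '' {i | ∀ᶠ a in (U : Filter ι), (M a).V p ((M a).g i)}
  g := Quotient.mk _

theorem named_namedUltraproduct : (namedUltraproduct U M).Named :=
  Quotient.mk_surjective

variable {U M}

theorem namedUltraproduct_g_eq_iff {i j : ℕ} :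
    (namedUltraproduct U M).g i = (namedUltraproduct U M).g j ↔
      ∀ᶠ a in (U : Filter ι), (M a).g i = (M a).g j :=
  Quotient.eq (r := nominalSetoid U M)

theorem sat_namedUltraproduct {φ : Form} (hφ : φ.elem) (i : ℕ) :
    sat (namedUltraproduct U M) ((namedUltraproduct U M).g i) φ ↔
      ∀ᶠ a in (U : Filter ι), sat (M a) ((M a).g i) φ := by
  cases φ <;> simp only [Form.elem] at hφ
  case prop p =>
    refine ⟨?_, fun h => ⟨i, h, rfl⟩⟩
    rintro ⟨j, hj, hji⟩
    filter_upwards [namedUltraproduct_g_eq_iff.1 hji, hj] with a hg hV using hg ▸ hV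
  case nom j => exact namedUltraproduct_g_eq_iff
  case rel j k =>
    refine ⟨?_, fun h => ⟨j, k, h, rfl, rfl⟩⟩
    rintro ⟨j', k', hR, hj, hk⟩
    filter_upwards [namedUltraproduct_g_eq_iff.1 hj, namedUltraproduct_g_eq_iff.1 hk, hR]
      with a hgj hgk hR
    rwa [hgj, hgk] at hR

theorem elemIWin_namedUltraproduct {s : NState} (hs : s.elem) :
    elemIWin (namedUltraproduct U M) s ↔ ∀ᶠ a in (U : Filter ι), elemIWin (M a) s := by
  rcases s with ⟨_ | _, i, φ⟩ | ⟨r, φ⟩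
  · exact sat_namedUltraproduct hs i
  · exact (sat_namedUltraproduct hs i).not.trans Ultrafilter.eventually_not.symm
  · exact hs.elim

end Ultraproduct

theorem exists_named_refutes_of_finite {T : Set NState}
    (h : ∀ F : Set NState, F.Finite → F ⊆ T → ∃ M : Model, M.Refutes F) :
    ∃ M : Model, M.Named ∧ M.Refutes T := by
  choose M hM using fun F : Finset T =>
    h (Subtype.val '' (F : Set T)) (F.finite_toSet.image _) (Subtype.coe_image_subset T _)
  let U := Ultrafilter.of (Filter.atTop : Filter (Finset T))
  refine ⟨namedUltraproduct U M, named_namedUltraproduct U M, fun s hs he => ?_⟩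
  have hU : ∀ᶠ F in (U : Filter (Finset T)), ¬ elemIWin (M F) s := by
    filter_upwards [Ultrafilter.of_le _ (Filter.eventually_ge_atTop {⟨s, hs⟩})] with F hF
    exact hM F s ⟨⟨s, hs⟩, Finset.singleton_subset_iff.1 hF, rfl⟩ he
  rw [elemIWin_namedUltraproduct he]
  exact Ultrafilter.eventually_not.1 hU

/-! ### Derivability -/

/-- `Forces S g D`: in the disjunctive state `D` with active game state `g`, I can ensure that the
next disjunctive state lies in `S`. -/
inductive Forces (S : Set DState) (g : NState) : DState → Prop
  | move {D : DState} {t : NState} : g.myTurn → NChild g t → t ::ₘ D ∈ S → Forces S g (g ::ₘ D)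
  | dup {D : DState} : g.myTurn → g ::ₘ g ::ₘ D ∈ S → Forces S g (g ::ₘ D)
  | resp {D : DState} : ¬ g.myTurn → ¬ g.elem → (∀ t, NChild g t → t ::ₘ D ∈ S) →
      Forces S g (g ::ₘ D)

theorem Forces.mono {S S' : Set DState} (hS : S ⊆ S') {g : NState} {D : DState}
    (h : Forces S g D) : Forces S' g D := by
  cases h with
  | move hm ht hD => exact .move hm ht (hS hD)
  | dup hm hD => exact .dup hm (hS hD)
  | resp hm he hD => exact .resp hm he fun t ht => hS (hD t ht)

theorem Forces.mem_and_not_elem {S : Set DState} {g : NState} {D : DState} (h : Forces S g D) :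
    g ∈ D ∧ ¬ g.elem := by
  cases h with
  | move hm | dup hm => exact ⟨Multiset.mem_cons_self _ _, NState.not_elem_of_myTurn hm⟩
  | resp _ he => exact ⟨Multiset.mem_cons_self _ _, he⟩

/-- The disjunctive states that are leaves labelled "I", or from which I can reach `S` in one move
after picking the active game state. -/
def derivationStep : Set DState →o Set DState where
  toFun S := {D | DElem D ∧ GameValid D ∨ ∃ g, Forces S g D}
  monotone' _ _ hS _ := Or.imp_right fun ⟨g, hg⟩ => ⟨g, hg.mono hS⟩

/-- The disjunctive states that I win in the variant of the disjunctive game without a regulation,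
where I pick the active game state at every move. -/
def Derivable (D : DState) : Prop :=
  D ∈ derivationStep.lfp

theorem Derivable.of_gameValid {D : DState} (he : DElem D) (hv : GameValid D) : Derivable D :=
  derivationStep.map_le_lfp le_rfl (Or.inl ⟨he, hv⟩)

theorem Forces.derivable {g : NState} {D : DState} (h : Forces {E | Derivable E} g D) :
    Derivable D :=
  derivationStep.map_le_lfp le_rfl (Or.inr ⟨g, h⟩)

theorem exists_isRegulation_of_choices {A : DState → NState → Prop}
    (hA : ∀ D g, A D g → g ∈ D ∧ ¬ g.elem) :
    ∃ ρ, IsRegulation ρ ∧ ∀ D, (∃ g, A D g) → A D (ρ D) := by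
  have choice (D : DState) :
      ∃ g, (¬ DElem D → g ∈ D ∧ ¬ g.elem) ∧ ((∃ g, A D g) → A D g) := by
    by_cases h : ∃ g, A D g
    · obtain ⟨g, hg⟩ := h
      exact ⟨g, fun _ => hA D g hg, fun _ => hg⟩
    by_cases he : DElem D
    · exact ⟨.glob .pro (.prop 0), absurd he, (absurd · h)⟩
    · obtain ⟨g, hg⟩ : ∃ g, g ∈ D ∧ ¬ g.elem := by simpa [DElem] using he
      exact ⟨g, fun _ => hg, (absurd · h)⟩
  choose ρ hρ hρA using choice
  exact ⟨ρ, hρ, hρA⟩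

theorem Forces.dWins {ρ : DState → NState} {D : DState} (h : Forces {E | DWins ρ E} (ρ D) D) :
    DWins ρ D := by
  generalize hg : ρ D = g at h
  cases h with
  | move hm ht hD => exact .movI hg hm ht hD
  | dup hm hD => exact .dup hg hm hD
  | resp hm he hD => exact .movY hg hm he hD

theorem Derivable.winning {D : DState} (h : Derivable D) : Winning D := by
  obtain ⟨rank, hrank⟩ := exists_rank_decreasing_on_lfp derivationStep
  obtain ⟨ρ, hρ, hforces⟩ := exists_isRegulation_of_choices
    (A := fun D g => Forces {E | Derivable E ∧ rank E < rank D} g D)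
    fun _ _ hg => hg.mem_and_not_elem
  refine ⟨ρ, hρ, ?_⟩
  induction ho : rank D using WellFoundedLT.induction generalizing D with
  | _ o ih =>
    subst ho
    rcases hrank D h with ⟨he, hv⟩ | hg
    · exact .leaf he hv
    · exact ((hforces D hg).mono fun E hE => ih _ hE.2 hE.1 rfl).dWins

/-! ### Underivable disjunctive states -/

theorem exists_child_not_derivable {s : NState} {C : DState} (hs : ¬ s.elem)
    (h : ¬ Derivable (s ::ₘ C)) : ∃ t, NChild s t ∧ ¬ Derivable (t ::ₘ C) := by
  by_contra! hC
  by_cases hm : s.myTurn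
  · have h0 := NState.nChild_child hs 0
    exact h (Forces.move hm h0 (hC _ h0)).derivable
  · exact h (Forces.resp hm hs hC).derivable

theorem not_derivable_child_cons {s t : NState} {C : DState} (hm : s.myTurn) (ht : NChild s t)
    (h : ¬ Derivable (s ::ₘ C)) : ¬ Derivable (t ::ₘ s ::ₘ C) :=
  fun hd => h (Forces.dup hm (Forces.move hm ht hd).derivable).derivable

theorem exists_elementary_not_derivable {D : DState} (h : ¬ Derivable D) :
    ∃ E, DElem E ∧ ¬ Derivable E ∧ ∀ s ∈ D, s.elem → s ∈ E := by
  induction hn : (D.map NState.complexity).sum using Nat.strong_induction_on generalizing D with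
  | _ n ih =>
    subst hn
    by_cases hD : DElem D
    · exact ⟨D, hD, h, fun _ hs _ => hs⟩
    obtain ⟨s, hsD, hs⟩ : ∃ s ∈ D, ¬ s.elem := by simpa [DElem] using hD
    obtain ⟨C, rfl⟩ := Multiset.exists_cons_of_mem hsD
    obtain ⟨t, hst, ht⟩ := exists_child_not_derivable hs h
    obtain ⟨E, hE, hEd, hCE⟩ := ih _ (by simpa using hst.complexity_lt) ht rfl
    refine ⟨E, hE, hEd, fun u hu hue => hCE u (Multiset.mem_cons_of_mem ?_) hue⟩
    exact (Multiset.mem_cons.1 hu).resolve_left fun hus => hs (hus ▸ hue)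

theorem exists_refutes_of_not_derivable {D : DState} (h : ¬ Derivable D) :
    ∃ M : Model, M.Refutes {s | s ∈ D} := by
  obtain ⟨E, hE, hEd, hDE⟩ := exists_elementary_not_derivable h
  have hv : ¬ GameValid E := fun hv => hEd (.of_gameValid hE hv)
  obtain ⟨M, -, hM⟩ : ∃ M : Model, M.Named ∧ ∀ s ∈ E, ¬ IWinsN M s := by
    simpa [GameValid] using hv
  exact ⟨M, fun s hs he hw => hM s (hDE s hs he) (.leaf he hw)⟩

/-! ### Fair decomposition -/

/-- `Decomposes n s E`: the disjunctive state `E` accounts for one round of play in `s`, in which I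
have tried the first `n` children of `s`, or You have moved. States in which You have moved are
not required to persist. -/
structure Decomposes (n : ℕ) (s : NState) (E : DState) : Prop where
  self_mem : s.elem ∨ s.myTurn → s ∈ E
  child_mem : s.myTurn → ∀ k < n, s.child k ∈ E
  exists_child_mem : ¬ s.elem → ¬ s.myTurn → ∃ t ∈ E, NChild s t

theorem Decomposes.mono {n : ℕ} {s : NState} {E E' : DState} (h : Decomposes n s E)
    (hE : E ⊆ E') : Decomposes n s E' where
  self_mem hs := hE (h.self_mem hs)
  child_mem hm k hk := hE (h.child_mem hm k hk)
  exists_child_mem he hm := (h.exists_child_mem he hm).imp fun _ ht => ⟨hE ht.1, ht.2⟩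

theorem exists_children_not_derivable {s : NState} {C : DState} (hm : s.myTurn)
    (h : ¬ Derivable (s ::ₘ C)) (n : ℕ) :
    ∃ E : DState, ¬ Derivable (s ::ₘ E + C) ∧ ∀ k < n, s.child k ∈ E := by
  induction n with
  | zero => exact ⟨0, by simpa using h, by simp⟩
  | succ n ih =>
    obtain ⟨E, hE, hchild⟩ := ih
    have hn : NChild s (s.child n) := NState.nChild_child (NState.not_elem_of_myTurn hm) n
    refine ⟨s.child n ::ₘ E, ?_, fun k hk => ?_⟩
    · rw [Multiset.cons_swap, Multiset.cons_add]
      rw [Multiset.cons_add] at hE ⊢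
      exact not_derivable_child_cons hm hn hE
    · rcases Nat.lt_succ_iff_lt_or_eq.1 hk with hk | rfl
      · exact Multiset.mem_cons_of_mem (hchild k hk)
      · exact Multiset.mem_cons_self _ _

theorem exists_decomposes_of_not_derivable_cons (n : ℕ) {s : NState} {C : DState}
    (h : ¬ Derivable (s ::ₘ C)) : ∃ E : DState, ¬ Derivable (E + C) ∧ Decomposes n s E := by
  by_cases he : s.elem
  · exact ⟨{s}, h, fun _ => Multiset.mem_singleton_self s,
      fun hm => absurd he (NState.not_elem_of_myTurn hm), absurd he⟩
  by_cases hm : s.myTurn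
  · obtain ⟨E, hE, hchild⟩ := exists_children_not_derivable hm h n
    exact ⟨s ::ₘ E, hE, fun _ => Multiset.mem_cons_self _ _,
      fun _ k hk => Multiset.mem_cons_of_mem (hchild k hk), fun _ => absurd hm⟩
  · obtain ⟨t, hst, ht⟩ := exists_child_not_derivable he h
    exact ⟨{t}, ht, fun hs => (hs.elim he hm).elim, fun h => absurd h hm,
      fun _ _ => ⟨t, Multiset.mem_singleton_self t, hst⟩⟩

theorem exists_decomposes_of_not_derivable_add (n : ℕ) {D C : DState} (h : ¬ Derivable (D + C)) :
    ∃ E : DState, ¬ Derivable (E + C) ∧ ∀ s ∈ D, Decomposes n s E := by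
  induction D using Multiset.induction_on generalizing C with
  | empty => exact ⟨0, h, by simp⟩
  | cons s D ih =>
    rw [Multiset.cons_add, ← Multiset.add_cons] at h
    obtain ⟨E, hE, hD⟩ := ih h
    rw [Multiset.add_cons] at hE
    obtain ⟨F, hF, hs⟩ := exists_decomposes_of_not_derivable_cons n hE
    refine ⟨F + E, by rwa [add_assoc], Multiset.forall_mem_cons.2 ⟨?_, fun u hu => ?_⟩⟩
    · exact hs.mono (Multiset.subset_of_le (Multiset.le_add_right F E))
    · exact (hD u hu).mono (Multiset.subset_of_le (Multiset.le_add_left E F))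

/-- A sequence of disjunctive states in which round `n` decomposes every game state of `S n`. Since
My states persist and are given more children in every round, each child is added in the end. -/
def FairDecomposition (S : ℕ → DState) : Prop :=
  ∀ n, ∀ s ∈ S n, Decomposes n s (S (n + 1))

theorem exists_fairDecomposition {D : DState} (h : ¬ Derivable D) :
    ∃ S : ℕ → DState, S 0 = D ∧ (∀ n, ¬ Derivable (S n)) ∧ FairDecomposition S := by
  have step (n : ℕ) (L : {L // ¬ Derivable L}) :
      ∃ L' : {L // ¬ Derivable L}, ∀ s ∈ L.1, Decomposes n s L'.1 := by
    obtain ⟨E, hE, hL⟩ := exists_decomposes_of_not_derivable_add n (C := 0) (by simpa using L.2)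
    exact ⟨⟨E, by simpa using hE⟩, hL⟩
  choose next hnext using step
  let S (n : ℕ) : {L // ¬ Derivable L} := Nat.rec ⟨D, h⟩ next n
  exact ⟨fun n => (S n).1, rfl, fun n => (S n).2, fun n => hnext n (S n)⟩

theorem FairDecomposition.mem_of_le {S : ℕ → DState} (hS : FairDecomposition S) {s : NState}
    (hs : s.elem ∨ s.myTurn) {m n : ℕ} (hmn : m ≤ n) (hsm : s ∈ S m) : s ∈ S n := by
  induction n, hmn using Nat.le_induction with
  | base => exact hsm
  | succ n _ ih => exact (hS n s ih).self_mem hs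

theorem FairDecomposition.saturated {S : ℕ → DState} (hS : FairDecomposition S) :
    Saturated {s | ∃ n, s ∈ S n} where
  child_mem := by
    rintro s ⟨n, hn⟩ hm t ht
    obtain ⟨k, rfl⟩ := ht.exists_child_eq
    have hmax : s ∈ S (max n (k + 1)) := hS.mem_of_le (.inr hm) (le_max_left _ _) hn
    exact ⟨_, (hS _ s hmax).child_mem hm k (le_max_right n (k + 1))⟩
  exists_child_mem := by
    rintro s ⟨n, hn⟩ he hm
    obtain ⟨t, ht, hst⟩ := (hS n s hn).exists_child_mem he hm
    exact ⟨t, ⟨n + 1, ht⟩, hst⟩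

theorem FairDecomposition.exists_forall_elem_mem {S : ℕ → DState} (hS : FairDecomposition S)
    {F : Set NState} (hF : F.Finite) (hFS : F ⊆ {s | ∃ n, s ∈ S n}) :
    ∃ n, ∀ s ∈ F, s.elem → s ∈ S n := by
  have eventually_mem : ∀ s ∈ F, ∀ᶠ n in Filter.atTop, s.elem → s ∈ S n := fun s hs => by
    obtain ⟨m, hm⟩ := hFS hs
    filter_upwards [Filter.eventually_ge_atTop m] with n hmn he
    exact hS.mem_of_le (.inl he) hmn hm
  exact ((Filter.eventually_all_finite hF).2 eventually_mem).exists

theorem exists_saturated_of_not_derivable {D : DState} (h : ¬ Derivable D) :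
    ∃ T : Set NState, {s | s ∈ D} ⊆ T ∧ Saturated T ∧
      ∀ F : Set NState, F.Finite → F ⊆ T → ∃ M : Model, M.Refutes F := by
  obtain ⟨S, rfl, hd, hS⟩ := exists_fairDecomposition h
  refine ⟨{s | ∃ n, s ∈ S n}, fun s hs => ⟨0, hs⟩, hS.saturated, fun F hF hFS => ?_⟩
  obtain ⟨n, hn⟩ := hS.exists_forall_elem_mem hF hFS
  obtain ⟨M, hM⟩ := exists_refutes_of_not_derivable (hd n)
  exact ⟨M, fun s hs he => hM s (hn s hs he) he⟩

/-- (Countermodel extraction) If a disjunctive state `D₀` is not winning, then there is a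
named model `M` such that You have a winning strategy in the semantic game `G(M, g)` for
every game state `g` occurring in `D₀`. -/
theorem countermodel_of_not_winning (D₀ : DState) (h : ¬ Winning D₀) :
    ∃ M : Model, M.Named ∧ ∀ s ∈ D₀, YWinsN M s := by
  have hD : ¬ Derivable D₀ := fun hd => h hd.winning
  obtain ⟨T, hDT, hT, hfin⟩ := exists_saturated_of_not_derivable hD
  obtain ⟨M, hnamed, hM⟩ := exists_named_refutes_of_finite hfin
  exact ⟨M, hnamed, fun s hs => hT.yWinsN hM (hDT hs)⟩
end
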